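/- Let ϱ > 0 be real, d ≥ 2 an integer, define λ_k^ϱ := e^{−2/ϱ²}·ϱ^{d−1}·Γ((d+1)/2)·I_{k+(d−1)/2}(2/ϱ²) with I_ν(z) := ∑_{j=0}^{∞} (z/2)^{ν+2j}/(j!·Γ(j+ν+1)), and define τ_k^d := (2k+d−1)·(k+d−2)!/(k!·(d−1)!) for k = 0, 1, 2, …. Then for every k ≥ 0 one has λ_{k+1}^ϱ·τ_{k+1}^d < (2/ϱ²)·((k+d−1)/((2k+d−1)(k+1)))·λ_k^ϱ·τ_k^d; in particular, the Schoenberg coefficients a_k := λ_k^ϱ·τ_k^d of the spherical Gaussian kernel satisfy a_{k+1} < (2/ϱ²)·a_k. -/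

import Mathlib

open Real

/-- The modified Bessel function of the first kind, defined by its power series. -/
noncomputable def modifiedBesselI (ν z : ℝ) : ℝ :=
  ∑' j : ℕ, (z / 2) ^ (ν + 2 * (j : ℝ)) / ((Nat.factorial j : ℝ) * Real.Gamma ((j : ℝ) + ν + 1))

/-!
Raising the order of `I_ν` by one multiplies the `j`-th term of its series by `(z / 2) / (j + ν + 1)`,
a factor that is strictly largest at `j = 0`; hence `I_{ν+1}(z) < (z / 2) / (ν + 1) * I_ν(z)`. For
`ν = k + (d - 1) / 2` and `z = 2 / ϱ²` the constant is `(2 / ϱ²) / (2k + d + 1)`, whose denominator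
cancels against the factor `2k + d + 1` of `τ_{k+1}`.
-/

/-- The `j`-th term of the power series of the modified Bessel function `I_ν`. -/
noncomputable def modifiedBesselITerm (ν z : ℝ) (j : ℕ) : ℝ :=
  (z / 2) ^ (ν + 2 * (j : ℝ)) / ((Nat.factorial j : ℝ) * Real.Gamma ((j : ℝ) + ν + 1))

section Bessel

variable {ν z : ℝ}

lemma modifiedBesselI_eq_tsum (ν z : ℝ) :
    modifiedBesselI ν z = ∑' j, modifiedBesselITerm ν z j := rfl

lemma modifiedBesselITerm_pos (hν : -1 < ν) (hz : 0 < z) (j : ℕ) :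
    0 < modifiedBesselITerm ν z j := by
  have hΓ : 0 < Real.Gamma ((j : ℝ) + ν + 1) :=
    Real.Gamma_pos_of_pos (by linarith [j.cast_nonneg (α := ℝ)])
  unfold modifiedBesselITerm
  positivity

lemma modifiedBesselITerm_add_one (hz : 0 < z) {j : ℕ} (hj : (j : ℝ) + ν + 1 ≠ 0) :
    modifiedBesselITerm (ν + 1) z j = z / 2 / (j + ν + 1) * modifiedBesselITerm ν z j := by
  have hpow : (z / 2) ^ (ν + 1 + 2 * (j : ℝ)) = (z / 2) ^ (ν + 2 * (j : ℝ)) * (z / 2) := by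
    rw [add_right_comm, Real.rpow_add_one (by positivity)]
  have hΓ : Real.Gamma ((j : ℝ) + (ν + 1) + 1) = (j + ν + 1) * Real.Gamma (j + ν + 1) := by
    rw [← add_assoc, Real.Gamma_add_one hj]
  rw [modifiedBesselITerm, modifiedBesselITerm, hpow, hΓ, div_mul_div_comm]
  ring

lemma modifiedBesselITerm_succ (hz : 0 < z) {j : ℕ} (hj : (j : ℝ) + ν + 1 ≠ 0) :
    modifiedBesselITerm ν z (j + 1) =
      (z / 2) ^ 2 / ((j + 1) * (j + ν + 1)) * modifiedBesselITerm ν z j := by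
  have hpow : (z / 2) ^ (ν + 2 * ((j + 1 : ℕ) : ℝ)) =
      (z / 2) ^ (ν + 2 * (j : ℝ)) * (z / 2) ^ 2 := by
    rw [← Real.rpow_add_natCast (by positivity)]
    push_cast
    ring_nf
  have hΓ : Real.Gamma (((j + 1 : ℕ) : ℝ) + ν + 1) = (j + ν + 1) * Real.Gamma (j + ν + 1) := by
    rw [← Real.Gamma_add_one hj]
    push_cast
    ring_nf
  rw [modifiedBesselITerm, modifiedBesselITerm, hpow, hΓ, Nat.factorial_succ, div_mul_div_comm]
  push_cast
  ring

open Filter Topology in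
lemma summable_modifiedBesselITerm (ν : ℝ) (hz : 0 < z) :
    Summable (modifiedBesselITerm ν z) := by
  have hshift (c : ℝ) : Tendsto (fun j : ℕ => (j : ℝ) + c) atTop atTop :=
    tendsto_atTop_add_const_right _ c tendsto_natCast_atTop_atTop
  have hratio : Tendsto (fun j : ℕ => (z / 2) ^ 2 / (((j : ℝ) + 1) * (j + (ν + 1)))) atTop (𝓝 0) :=
    ((hshift 1).atTop_mul_atTop₀ (hshift (ν + 1))).const_div_atTop _
  refine summable_of_ratio_norm_eventually_le one_half_lt_one ?_
  filter_upwards [hratio.eventually_le_const one_half_pos,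
    (hshift (ν + 1)).eventually_gt_atTop 0] with j hle hpos
  rw [← add_assoc] at hle hpos
  rw [modifiedBesselITerm_succ hz hpos.ne', norm_mul, Real.norm_of_nonneg (by positivity)]
  gcongr

lemma modifiedBesselI_pos (hν : -1 < ν) (hz : 0 < z) : 0 < modifiedBesselI ν z :=
  (summable_modifiedBesselITerm ν hz).tsum_pos
    (fun j => (modifiedBesselITerm_pos hν hz j).le) 0 (modifiedBesselITerm_pos hν hz 0)

lemma modifiedBesselI_add_one_lt (hν : -1 < ν) (hz : 0 < z) :
    modifiedBesselI (ν + 1) z < z / 2 / (ν + 1) * modifiedBesselI ν z := by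
  have hν' : 0 < ν + 1 := by linarith
  have hden (j : ℕ) : 0 < (j : ℝ) + ν + 1 := by linarith [j.cast_nonneg (α := ℝ)]
  rw [modifiedBesselI_eq_tsum, modifiedBesselI_eq_tsum, ← tsum_mul_left]
  refine Summable.tsum_lt_tsum (i := 1) (fun j => ?_) ?_
    (summable_modifiedBesselITerm (ν + 1) hz) ((summable_modifiedBesselITerm ν hz).mul_left _)
  · rw [modifiedBesselITerm_add_one hz (hden j).ne']
    have := (modifiedBesselITerm_pos hν hz j).le
    gcongr
    linarith [j.cast_nonneg (α := ℝ)]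
  · rw [modifiedBesselITerm_add_one hz (hden 1).ne']
    have := modifiedBesselITerm_pos hν hz 1
    gcongr
    norm_num

end Bessel

/-- The eigenvalue `λ_k^ϱ` of the Gaussian kernel `exp (-2 ϱ⁻² (1 - x ⬝ y))` on the sphere `𝕊^d`,
given by its closed form in terms of the modified Bessel function. -/
noncomputable def gaussianEigenvalue (ϱ : ℝ) (d k : ℕ) : ℝ :=
  Real.exp (-2 / ϱ ^ 2) * ϱ ^ (d - 1) * Real.Gamma (((d : ℝ) + 1) / 2) *
    modifiedBesselI ((k : ℝ) + ((d : ℝ) - 1) / 2) (2 / ϱ ^ 2)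

/-- The dimension `τ_k^d` of the space of spherical harmonics of degree `k` on `𝕊^d`, given by its
closed form as a real number. On the circle the formula breaks down at `k = 0`, where it gives `0`
instead of `1`. -/
noncomputable def sphericalHarmonicDim (d k : ℕ) : ℝ :=
  (2 * (k : ℝ) + (d : ℝ) - 1) * (Nat.factorial (k + d - 2) : ℝ) /
    ((Nat.factorial k : ℝ) * (Nat.factorial (d - 1) : ℝ))

section Gaussian

variable {ϱ : ℝ} {d : ℕ}

lemma neg_one_lt_natCast_add_half_pred (d k : ℕ) : -1 < (k : ℝ) + ((d : ℝ) - 1) / 2 := by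
  linarith [k.cast_nonneg (α := ℝ), d.cast_nonneg (α := ℝ)]

lemma gaussianEigenvalue_pos (hϱ : 0 < ϱ) (d k : ℕ) : 0 < gaussianEigenvalue ϱ d k := by
  have hI := modifiedBesselI_pos (neg_one_lt_natCast_add_half_pred d k)
    (show 0 < 2 / ϱ ^ 2 by positivity)
  unfold gaussianEigenvalue
  positivity

lemma gaussianEigenvalue_succ_lt (hϱ : 0 < ϱ) (d k : ℕ) :
    gaussianEigenvalue ϱ d (k + 1) <
      2 / ϱ ^ 2 / (2 * k + d + 1) * gaussianEigenvalue ϱ d k := by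
  have hI := modifiedBesselI_add_one_lt (neg_one_lt_natCast_add_half_pred d k)
    (show 0 < 2 / ϱ ^ 2 by positivity)
  have horder : ((k + 1 : ℕ) : ℝ) + ((d : ℝ) - 1) / 2 = k + ((d : ℝ) - 1) / 2 + 1 := by
    push_cast
    ring
  have hconst : 2 / ϱ ^ 2 / 2 / ((k : ℝ) + ((d : ℝ) - 1) / 2 + 1) =
      2 / ϱ ^ 2 / (2 * k + d + 1) := by
    rw [div_div]
    ring_nf
  rw [hconst] at hI
  rw [gaussianEigenvalue, gaussianEigenvalue, horder, mul_left_comm]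
  gcongr

lemma sphericalHarmonicDim_pos (hd : 2 ≤ d) (k : ℕ) : 0 < sphericalHarmonicDim d k := by
  have hd' : (2 : ℝ) ≤ d := by exact_mod_cast hd
  have hlin : 0 < 2 * (k : ℝ) + d - 1 := by linarith [k.cast_nonneg (α := ℝ)]
  unfold sphericalHarmonicDim
  positivity

lemma sphericalHarmonicDim_succ (hd : 2 ≤ d) (k : ℕ) :
    sphericalHarmonicDim d (k + 1) =
      (2 * k + d + 1) * ((k + d - 1) / ((2 * k + d - 1) * (k + 1))) *
        sphericalHarmonicDim d k := by
  have hd' : (2 : ℝ) ≤ d := by exact_mod_cast hd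
  have hlin : 2 * (k : ℝ) + d - 1 ≠ 0 := by linarith [k.cast_nonneg (α := ℝ)]
  have hfact : (Nat.factorial (k + 1 + d - 2) : ℝ) =
      (k + d - 1) * (Nat.factorial (k + d - 2) : ℝ) := by
    rw [show k + 1 + d - 2 = k + d - 2 + 1 by omega, Nat.factorial_succ]
    push_cast [Nat.cast_sub (show 2 ≤ k + d by omega)]
    ring
  rw [sphericalHarmonicDim, sphericalHarmonicDim, hfact, Nat.factorial_succ]
  push_cast
  field_simp
  ring

end Gaussian

theorem gaussian_schoenberg_coefficient_inequality (ϱ : ℝ) (hϱ : 0 < ϱ) (d : ℕ) (hd : 2 ≤ d)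
    (lam : ℕ → ℝ)
    (hlam : ∀ k : ℕ, lam k =
      Real.exp (-2 / ϱ ^ 2) * ϱ ^ (d - 1) * Real.Gamma (((d : ℝ) + 1) / 2) *
        modifiedBesselI ((k : ℝ) + ((d : ℝ) - 1) / 2) (2 / ϱ ^ 2))
    (τ : ℕ → ℝ)
    (hτ : ∀ k : ℕ, τ k =
      (2 * (k : ℝ) + (d : ℝ) - 1) * (Nat.factorial (k + d - 2) : ℝ) /
        ((Nat.factorial k : ℝ) * (Nat.factorial (d - 1) : ℝ)))
    (a : ℕ → ℝ) (ha : ∀ k : ℕ, a k = lam k * τ k) :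
    ∀ k : ℕ,
      lam (k + 1) * τ (k + 1) <
        2 / ϱ ^ 2 * (((k : ℝ) + (d : ℝ) - 1) / ((2 * (k : ℝ) + (d : ℝ) - 1) * ((k : ℝ) + 1))) *
          (lam k * τ k) ∧
      a (k + 1) < 2 / ϱ ^ 2 * a k := by
  obtain rfl : lam = gaussianEigenvalue ϱ d := funext hlam
  obtain rfl : τ = sphericalHarmonicDim d := funext hτ
  intro k
  have hd' : (2 : ℝ) ≤ d := by exact_mod_cast hd
  have hlin : 0 < 2 * (k : ℝ) + d - 1 := by linarith [k.cast_nonneg (α := ℝ)]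
  have hlam_pos := gaussianEigenvalue_pos hϱ d k
  have hτ_pos := sphericalHarmonicDim_pos hd
  have hlt : gaussianEigenvalue ϱ d (k + 1) * sphericalHarmonicDim d (k + 1) <
      2 / ϱ ^ 2 * ((k + d - 1) / ((2 * k + d - 1) * (k + 1))) *
        (gaussianEigenvalue ϱ d k * sphericalHarmonicDim d k) := by
    refine (mul_lt_mul_of_pos_right (gaussianEigenvalue_succ_lt hϱ d k)
      (hτ_pos (k + 1))).trans_eq ?_
    rw [sphericalHarmonicDim_succ hd]
    field_simp
  have hratio : ((k : ℝ) + d - 1) / ((2 * k + d - 1) * (k + 1)) ≤ 1 :=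
    div_le_one_of_le₀ (by nlinarith [k.cast_nonneg (α := ℝ)]) (by positivity)
  refine ⟨hlt, ?_⟩
  rw [ha, ha]
  refine hlt.trans_le (mul_le_mul_of_nonneg_right ?_ (mul_pos hlam_pos (hτ_pos k)).le)
  exact mul_le_of_le_one_right (by positivity) hratio
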